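/- For n ≥ 1, x > 0, and 0 ≤ β < 1, setting y = nx and p = 1/(1-β), the central first moment satisfies ∑_{k=0}^∞ (k/n − x)·L_{n,k}^{(β)}(x) = xβ/(1-β). -/

import Mathlib

noncomputable def jainL (n : ℕ) (β x : ℝ) (k : ℕ) : ℝ :=
  n * x * ((n * x + k * β) ^ (k : ℕ) / (n * x + k * β)) / (Nat.factorial k) *
    Real.exp (-(n * x + k * β))

/-!
Write `S(y)` for the sum of `(y + kβ)^k e^{-(y + kβ)} / k!` over `k`. Expanding the exponentials
and collecting the terms of degree `m` in `(y, β)` produces `1 / m!` times the `m`-th finite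
difference with step `β` of `t ↦ t^m`, that is, `β^m`. Hence `S(y) = ∑ β^m = 1 / (1 - β)` as soon
as the rearrangement is absolutely convergent, which happens for small `β`. For `y = cβ` one has
`S(cβ) = e^{-cβ} F(βe^{-β})` with `F` a power series of radius at least `1 / e`, so the identity
theorem carries the formula over to the interval `jainDomain`.

With `y = nx`, the `(k + 1)`-st term of `∑ k L_k` is `y` times the `k`-th term of `S(y + β)`, so
the mean is `y / (1 - β)`; and `L_k` is the `k`-th term of `S(y)` minus `(β / y) k L_k`, so the
total mass is `1`.
-/

open Finset Topology
open scoped Nat NNReal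

lemma sum_range_neg_one_pow_mul_choose_mul_add_pow {R : Type*} [CommRing R] (c : R) (m : ℕ) :
    ∑ k ∈ range (m + 1), (-1) ^ (m - k) * (m.choose k : R) * (c + k) ^ m = (m ! : R) := by
  have h := fwdDiff_iter_eq_sum_shift (1 : R) (fun t ↦ t ^ m) m c
  rw [fwdDiff_iter_eq_factorial] at h
  simpa using h.symm

lemma sum_antidiagonal_add_pow_div_factorial {K : Type*} [Field K] [CharZero K] (c : K) (m : ℕ) :
    ∑ p ∈ antidiagonal m, (c + p.1) ^ p.1 / (p.1 ! : K) * ((-(c + p.1)) ^ p.2 / (p.2 ! : K)) =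
      1 := by
  have hm : (m ! : K) ≠ 0 := mod_cast m.factorial_ne_zero
  rw [← mul_right_inj' hm, mul_one, mul_sum, Nat.sum_antidiagonal_eq_sum_range_succ_mk]
  refine (sum_congr rfl fun k hk ↦ ?_).trans (sum_range_neg_one_pow_mul_choose_mul_add_pow c m)
  obtain ⟨j, rfl⟩ := Nat.exists_eq_add_of_le (mem_range_succ_iff.1 hk)
  have hk0 : (k ! : K) ≠ 0 := mod_cast k.factorial_ne_zero
  have hj0 : (j ! : K) ≠ 0 := mod_cast j.factorial_ne_zero
  rw [Nat.cast_choose K (Nat.le_add_right k j), Nat.add_sub_cancel_left,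
    neg_pow (c + (k : K)) j, pow_add]
  field_simp

lemma hasSum_sum_antidiagonal {A α : Type*} [AddCommMonoid A] [HasAntidiagonal A]
    [AddCommMonoid α] [TopologicalSpace α] [ContinuousAdd α] [RegularSpace α]
    {f : A × A → α} {a : α} (hf : HasSum f a) :
    HasSum (fun m ↦ ∑ p ∈ antidiagonal m, f p) a := by
  refine (HasAntidiagonal.sigmaAntidiagonalEquivProd.hasSum_iff.2 hf).sigma fun m ↦ ?_
  rw [← sum_coe_sort]
  exact hasSum_fintype _

lemma analyticAt_tsum_mul_pow {𝕜 : Type*} [NontriviallyNormedField 𝕜] [CompleteSpace 𝕜]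
    {a : ℕ → 𝕜} {r : ℝ≥0} {C : ℝ} (ha : ∀ k, ‖a k‖ * (r : ℝ) ^ k ≤ C) {z : 𝕜} (hz : ‖z‖ < r) :
    AnalyticAt 𝕜 (fun w ↦ ∑' k, a k * w ^ k) z := by
  set p := FormalMultilinearSeries.ofScalars 𝕜 a
  have hr : (r : ENNReal) ≤ p.radius :=
    p.le_radius_of_bound C fun k ↦ by simpa [p] using ha k
  have hzr : z ∈ Metric.eball (0 : 𝕜) r := by simpa [Metric.eball_coe] using hz
  have hr0 : 0 < p.radius :=
    (ENNReal.coe_pos.2 (NNReal.coe_pos.1 ((norm_nonneg z).trans_lt hz))).trans_le hr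
  have hsum : p.sum = fun w ↦ ∑' k, a k * w ^ k :=
    funext (FormalMultilinearSeries.ofScalars_sum_eq a)
  exact hsum ▸ (p.hasFPowerSeriesOnBall hr0).analyticAt_of_mem (Metric.eball_subset_eball hr hzr)

lemma hasSum_pow_div_factorial (t : ℝ) : HasSum (fun j : ℕ ↦ t ^ j / j !) (Real.exp t) := by
  rw [Real.exp_eq_exp_ℝ]
  exact NormedSpace.expSeries_div_hasSum_exp t

/-- The coefficients `(c + k)^k / k!` of Abel's generalization of the exponential series, a power
series in `z = βe^{-β}`. -/
noncomputable def abelCoeff (c : ℝ) (k : ℕ) : ℝ := (c + k) ^ k / k !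

lemma abs_abelCoeff_le (c : ℝ) (k : ℕ) : |abelCoeff c k| ≤ Real.exp (|c| + k) := by
  have hck : |c + k| ≤ |c| + k := by simpa using abs_add_le c k
  calc |abelCoeff c k| = |c + k| ^ k / k ! := by simp [abelCoeff, abs_div]
    _ ≤ (|c| + k) ^ k / k ! := by gcongr
    _ ≤ Real.exp (|c| + k) := Real.pow_div_factorial_le_exp _ (by positivity) k

lemma abs_abelCoeff_mul_exp_neg_one_pow_le (c : ℝ) (k : ℕ) :
    |abelCoeff c k| * Real.exp (-1) ^ k ≤ Real.exp |c| := by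
  calc |abelCoeff c k| * Real.exp (-1) ^ k
      ≤ Real.exp (|c| + k) * Real.exp (-1) ^ k := by gcongr; exact abs_abelCoeff_le c k
    _ = Real.exp |c| := by rw [← Real.exp_nat_mul, ← Real.exp_add]; ring_nf

lemma summable_abelCoeff_mul_pow (c : ℝ) {z : ℝ} (hz : |z| < Real.exp (-1)) :
    Summable fun k ↦ abelCoeff c k * z ^ k := by
  have hratio : |z| / Real.exp (-1) < 1 := (div_lt_one (Real.exp_pos _)).2 hz
  refine Summable.of_norm_bounded
    ((summable_geometric_of_lt_one (by positivity) hratio).mul_left (Real.exp |c|)) fun k ↦ ?_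
  calc ‖abelCoeff c k * z ^ k‖
      = |abelCoeff c k| * Real.exp (-1) ^ k * (|z| / Real.exp (-1)) ^ k := by
        rw [norm_mul, norm_pow, Real.norm_eq_abs, Real.norm_eq_abs, div_pow]; field_simp
    _ ≤ Real.exp |c| * (|z| / Real.exp (-1)) ^ k := by
        gcongr; exact abs_abelCoeff_mul_exp_neg_one_pow_le c k

lemma analyticAt_tsum_abelCoeff_mul_pow (c : ℝ) {z : ℝ} (hz : |z| < Real.exp (-1)) :
    AnalyticAt ℝ (fun w ↦ ∑' k, abelCoeff c k * w ^ k) z :=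
  analyticAt_tsum_mul_pow (r := ⟨Real.exp (-1), (Real.exp_pos _).le⟩)
    (abs_abelCoeff_mul_exp_neg_one_pow_le c) hz

lemma summable_abelCoeff_mul_pow_mul_pow_div_factorial (c : ℝ) {β : ℝ}
    (hβ : |β| * Real.exp |β| < Real.exp (-1)) :
    Summable fun p : ℕ × ℕ ↦
      abelCoeff c p.1 * β ^ p.1 * ((-((c + p.1) * β)) ^ p.2 / p.2 !) := by
  have hrow (k : ℕ) : HasSum
      (fun j : ℕ ↦ ‖abelCoeff c k * β ^ k * ((-((c + k) * β)) ^ j / j !)‖)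
      (|abelCoeff c k * β ^ k| * Real.exp |(c + k) * β|) := by
    simpa [abs_mul, abs_div] using
      (hasSum_pow_div_factorial |(c + k) * β|).mul_left |abelCoeff c k * β ^ k|
  refine Summable.of_norm ((summable_prod_of_nonneg fun _ ↦ norm_nonneg _).2
    ⟨fun k ↦ (hrow k).summable, ?_⟩)
  simp_rw [(hrow _).tsum_eq]
  have hz : |(|β| * Real.exp |β|)| < Real.exp (-1) := by rwa [abs_of_nonneg (by positivity)]
  refine Summable.of_nonneg_of_le (fun k ↦ by positivity) (fun k ↦ ?_)
    ((summable_abelCoeff_mul_pow c hz).abs.mul_left (Real.exp (|c| * |β|)))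
  have hck : |(c + k) * β| ≤ |c| * |β| + k * |β| := by
    rw [abs_mul, ← add_mul]
    gcongr
    simpa using abs_add_le c k
  calc |abelCoeff c k * β ^ k| * Real.exp |(c + k) * β|
      ≤ |abelCoeff c k * β ^ k| * Real.exp (|c| * |β| + k * |β|) := by gcongr
    _ = Real.exp (|c| * |β|) * |abelCoeff c k * (|β| * Real.exp |β|) ^ k| := by
        rw [Real.exp_add, Real.exp_nat_mul, abs_mul, abs_mul, mul_pow, abs_mul, abs_pow, abs_pow,
          abs_pow, abs_abs, Real.abs_exp]
        ring

/-- The terms `(y + kβ)^k e^{-(y + kβ)} / k!`, that is, the Jain basis functions with `y = nx` whose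
factor `y (y + kβ)^{k-1}` is replaced by `(y + kβ)^k`. -/
noncomputable def jainTerm (y β : ℝ) (k : ℕ) : ℝ :=
  (y + k * β) ^ k / k ! * Real.exp (-(y + k * β))

lemma jainTerm_mul (c β : ℝ) (k : ℕ) :
    jainTerm (c * β) β k = abelCoeff c k * β ^ k * Real.exp (-((c + k) * β)) := by
  rw [jainTerm, abelCoeff, ← add_mul, mul_pow]
  ring

lemma jainTerm_mul_eq_exp_mul (c β : ℝ) (k : ℕ) :
    jainTerm (c * β) β k =
      Real.exp (-(c * β)) * (abelCoeff c k * (β * Real.exp (-β)) ^ k) := by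
  have hexp : Real.exp (-((c + k) * β)) = Real.exp (-(c * β)) * Real.exp (-β) ^ k := by
    rw [← Real.exp_nat_mul, ← Real.exp_add]; ring_nf
  rw [jainTerm_mul, hexp, mul_pow]
  ring

lemma hasSum_jainTerm_mul_of_abs_mul_exp_abs_lt (c : ℝ) {β : ℝ}
    (hβ : |β| * Real.exp |β| < Real.exp (-1)) :
    HasSum (jainTerm (c * β) β) (1 - β)⁻¹ := by
  have hβ1 : |β| < 1 := calc
    |β| ≤ |β| * Real.exp |β| := le_mul_of_one_le_right (abs_nonneg β) (by simp)
    _ < Real.exp (-1) := hβ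
    _ < 1 := by simp
  obtain ⟨s, hs⟩ := summable_abelCoeff_mul_pow_mul_pow_div_factorial c hβ
  have hrows : HasSum (jainTerm (c * β) β) s := by
    rw [funext (jainTerm_mul c β)]
    exact hs.prod_fiberwise fun k ↦ (hasSum_pow_div_factorial _).mul_left _
  have hdiag : HasSum (fun m ↦ β ^ m) s := by
    refine (hasSum_sum_antidiagonal hs).congr_fun fun m ↦ ?_
    rw [← mul_one (β ^ m), ← sum_antidiagonal_add_pow_div_factorial c m, mul_sum]
    refine sum_congr rfl fun p hp ↦ ?_
    rw [← mem_antidiagonal.1 hp, abelCoeff, ← neg_mul, mul_pow, pow_add]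
    ring
  rwa [hdiag.unique (hasSum_geometric_of_abs_lt_one hβ1)] at hrows

/-- The interval of parameters on which the Jain series are summed: the part to the left of the
maximum of `β ↦ βe^{-β}` at `1` where `βe^{-β}` lies in the disc of convergence `|z| < 1 / e` of
the power series with coefficients `abelCoeff c`. -/
def jainDomain : Set ℝ := {β | β < 1 ∧ -Real.exp (-1) < β * Real.exp (-β)}

lemma Ico_zero_one_subset_jainDomain : Set.Ico 0 1 ⊆ jainDomain := fun _ hβ ↦
  ⟨hβ.2, (neg_neg_of_pos (Real.exp_pos _)).trans_le (mul_nonneg hβ.1 (Real.exp_pos _).le)⟩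

lemma abs_mul_exp_neg_lt_exp_neg_one {β : ℝ} (hβ : β ∈ jainDomain) :
    |β * Real.exp (-β)| < Real.exp (-1) := by
  refine abs_lt.2 ⟨hβ.2, ?_⟩
  calc β * Real.exp (-β)
      < Real.exp (β - 1) * Real.exp (-β) := by
        gcongr
        linarith [Real.add_one_lt_exp (sub_neg.2 hβ.1).ne]
    _ = Real.exp (-1) := by rw [← Real.exp_add]; ring_nf

lemma ordConnected_jainDomain : jainDomain.OrdConnected := by
  refine ⟨fun a ha b hb t ⟨hat, htb⟩ ↦ ⟨htb.trans_lt hb.1, ?_⟩⟩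
  rcases le_total 0 t with ht | ht
  · exact (neg_neg_of_pos (Real.exp_pos _)).trans_le (mul_nonneg ht (Real.exp_pos _).le)
  · calc -Real.exp (-1) < a * Real.exp (-a) := ha.2
      _ ≤ t * Real.exp (-a) := by gcongr
      _ ≤ t * Real.exp (-t) := mul_le_mul_of_nonpos_left (by gcongr) ht

lemma tsum_abelCoeff_mul_mul_exp_neg_pow (c : ℝ) {β : ℝ} (hβ : β ∈ jainDomain) :
    ∑' k, abelCoeff c k * (β * Real.exp (-β)) ^ k = Real.exp (c * β) / (1 - β) := by
  have hseries : AnalyticOnNhd ℝ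
      (fun b ↦ ∑' k, abelCoeff c k * (b * Real.exp (-b)) ^ k) jainDomain := fun b hb ↦
    (analyticAt_tsum_abelCoeff_mul_pow c (abs_mul_exp_neg_lt_exp_neg_one hb)).fun_comp
      (f := fun b ↦ b * Real.exp (-b)) (by fun_prop)
  have hclosed : AnalyticOnNhd ℝ (fun b ↦ Real.exp (c * b) / (1 - b)) jainDomain := fun b hb ↦
    AnalyticAt.div (by fun_prop) (by fun_prop) (sub_pos.2 hb.1).ne'
  have hsmall : ∀ᶠ b : ℝ in 𝓝 0, |b| * Real.exp |b| < Real.exp (-1) :=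
    ContinuousAt.eventually_lt (by fun_prop) (by fun_prop) (by simp [Real.exp_pos])
  have hnear : ∀ᶠ b in 𝓝 0, ∑' k, abelCoeff c k * (b * Real.exp (-b)) ^ k =
      Real.exp (c * b) / (1 - b) := by
    filter_upwards [hsmall] with b hb
    have hsum := (hasSum_jainTerm_mul_of_abs_mul_exp_abs_lt c hb).tsum_eq
    simp_rw [jainTerm_mul_eq_exp_mul, tsum_mul_left, Real.exp_neg (c * b)] at hsum
    rw [div_eq_mul_inv, ← hsum, mul_inv_cancel_left₀ (Real.exp_ne_zero _)]
  exact hseries.eqOn_of_preconnected_of_eventuallyEq hclosed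
    ordConnected_jainDomain.isPreconnected (Ico_zero_one_subset_jainDomain (by simp)) hnear hβ

theorem hasSum_jainTerm (y : ℝ) {β : ℝ} (hβ : β ∈ jainDomain) :
    HasSum (jainTerm y β) (1 - β)⁻¹ := by
  rcases eq_or_ne β 0 with rfl | hβ0
  · have h := (hasSum_pow_div_factorial y).mul_right (Real.exp (-y))
    rw [← Real.exp_add, add_neg_cancel, Real.exp_zero] at h
    simpa using h.congr_fun fun k ↦ (by simp [jainTerm] : jainTerm y 0 k = _)
  · obtain ⟨c, rfl⟩ : ∃ c, y = c * β := ⟨y / β, (div_mul_cancel₀ y hβ0).symm⟩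
    have h := (summable_abelCoeff_mul_pow c
      (abs_mul_exp_neg_lt_exp_neg_one hβ)).hasSum.mul_left (Real.exp (-(c * β)))
    rw [tsum_abelCoeff_mul_mul_exp_neg_pow c hβ, ← mul_div_assoc, ← Real.exp_add, neg_add_cancel,
      Real.exp_zero, one_div] at h
    exact h.congr_fun (jainTerm_mul_eq_exp_mul c β)

section JainBasis

variable {n : ℕ} {β x : ℝ}

lemma add_mul_jainL (k : ℕ) :
    (n * x + k * β) * jainL n β x k = n * x * jainTerm (n * x) β k := by
  rcases eq_or_ne (n * x + k * β) 0 with h | h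
  · rcases k with _ | k
    · have hnx : n * x = 0 := by simpa using h
      simp [hnx]
    · rw [jainTerm, h, zero_pow k.succ_ne_zero]
      simp
  · rw [jainL, jainTerm]
    field_simp

lemma add_one_mul_jainL_add_one (hxβ : n * x + β ≠ 0) (k : ℕ) :
    (k + 1) * jainL n β x (k + 1) = n * x * jainTerm (n * x + β) β k := by
  -- For `k ≥ 1` the base may vanish, since then `0 ^ (k + 1) / 0 = 0 = 0 ^ k`.
  have hpow : (n * x + (k + 1) * β) ^ (k + 1) / (n * x + (k + 1) * β) =
      (n * x + (k + 1) * β) ^ k := by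
    cases k with
    | zero => simp [hxβ]
    | succ k => rw [pow_succ, pow_succ, mul_assoc, mul_div_assoc, mul_self_div_self]
  have hshift : n * x + β + k * β = n * x + (k + 1) * β := by ring
  rw [jainL, jainTerm, Nat.factorial_succ, hshift]
  push_cast
  rw [hpow]
  field_simp

lemma jainL_eq_jainTerm_sub (hnx : n * x ≠ 0) (k : ℕ) :
    jainL n β x k = jainTerm (n * x) β k - β / (n * x) * (k * jainL n β x k) := by
  rw [← mul_right_inj' hnx, mul_sub, ← add_mul_jainL, ← mul_assoc _ (β / _),
    mul_div_cancel₀ _ hnx]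
  ring

lemma hasSum_natCast_mul_jainL (hβ : β ∈ jainDomain) (hxβ : n * x + β ≠ 0) :
    HasSum (fun k : ℕ ↦ k * jainL n β x k) (n * x / (1 - β)) := by
  rw [← hasSum_nat_add_iff' 1]
  simpa [add_one_mul_jainL_add_one hxβ, div_eq_mul_inv] using
    (hasSum_jainTerm (n * x + β) hβ).mul_left (n * x)

lemma hasSum_jainL (hβ : β ∈ jainDomain) (hnx : n * x ≠ 0) (hxβ : n * x + β ≠ 0) :
    HasSum (jainL n β x) 1 := by
  have hβ1 : 1 - β ≠ 0 := (sub_pos.2 hβ.1).ne'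
  have h := (hasSum_jainTerm (n * x) hβ).sub
    ((hasSum_natCast_mul_jainL hβ hxβ).mul_left (β / (n * x)))
  have hmass : (1 - β)⁻¹ - β / (n * x) * (n * x / (1 - β)) = 1 := by
    rw [← mul_div_assoc, div_mul_cancel₀ _ hnx]
    field_simp
  rw [hmass] at h
  exact h.congr_fun (jainL_eq_jainTerm_sub hnx)

end JainBasis

theorem jain_first_central_moment_general (n : ℕ) (x β : ℝ) (hβ : β ∈ jainDomain)
    (hnx : n * x ≠ 0) (hxβ : n * x + β ≠ 0) :
    HasSum (fun k : ℕ ↦ ((k / n : ℝ) - x) * jainL n β x k) (x * β / (1 - β)) := by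
  have hn : (n : ℝ) ≠ 0 := left_ne_zero_of_mul hnx
  have hβ1 : 1 - β ≠ 0 := (sub_pos.2 hβ.1).ne'
  have h := ((hasSum_natCast_mul_jainL hβ hxβ).mul_left (n : ℝ)⁻¹).sub
    ((hasSum_jainL hβ hnx hxβ).mul_left x)
  have hmoment : (n : ℝ)⁻¹ * (n * x / (1 - β)) - x * 1 = x * β / (1 - β) := by field_simp; ring
  rw [hmoment] at h
  exact h.congr_fun fun k ↦ by ring

theorem jain_first_central_moment (n : ℕ) (hn : 1 ≤ n) (x β : ℝ)
    (hx : 0 < x) (hβ0 : 0 ≤ β) (hβ1 : β < 1) :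
    HasSum (fun k : ℕ => ((k / n : ℝ) - x) * jainL n β x k) (x * β / (1 - β)) := by
  have hnx : 0 < n * x := mul_pos (mod_cast hn) hx
  exact jain_first_central_moment_general n x β (Ico_zero_one_subset_jainDomain ⟨hβ0, hβ1⟩)
    hnx.ne' (add_pos_of_pos_of_nonneg hnx hβ0).ne'
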